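/- There is an absolute constant c such that for every job instance J and every admissible ε, the total weight of jobs that algorithm A rejects immediately (the set J^imm) plus the total weight of jobs that ever enter the preemptible set L := ∪_t L(t) is at most c·ε·∑_{j∈J} w_j. -/

import Mathlib

/-!
The weight of the rejected jobs splits into four parts, each `O(ε)` times the total weight.

* A job enters `L` only after more than `w_j / ε` weight has been released since it started, and
  until then it runs without interruption. Hence the release windows of different such jobs are
  disjoint, and their weight is at most `ε` times the total weight (`sum_L_le`).
* All jobs of a bucket have the same weight up to a constant factor (`2` in `T⁺`, `4` in `T⁻`), and
  ranks are distinct within a bucket. So the jobs rejected for being a `k`-th one weigh only a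
  constant times `1 / k = ε` of the bucket (`sum_periodic_le`).
* For the first jobs of the buckets `(a, b)` of `T⁺`, group the jobs by density class `c`, and let
  `P c` be the total size of all jobs of density class at least `c`. Then `α⁺ / w` is at most the
  remaining volume in front of the job, so `2 ^ a ≤ P c`, and `α⁺ ≥ w p / ε` yields
  `2 ^ b ≤ 4 ε 2 ^ a 2 ^ c`. Summing `2 ^ b` over `b`, then over `a`, then over `c` amounts to three
  geometric sums, each dominated by its largest term, and
  `∑ c, 2 ^ c * P c ≤ 2 * ∑ j, 2 ^ (cls j) * p j ≤ 2 * ∑ j, w j` (`sum_first_le`).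
-/

open Finset
open scoped Classical

noncomputable section

namespace NPSched

/-- The density `ρ_j = w_j / p_j` of job `j`. -/
def den (p : ℕ → ℕ) (w : ℕ → ℝ) (j : ℕ) : ℝ := w j / p j

/-- The density class `⌊ρ_j⌋₂` of job `j`: the largest integer `i` with `2 ^ i ≤ ρ_j`. -/
def cls (p : ℕ → ℕ) (w : ℕ → ℝ) (j : ℕ) : ℤ := Int.log 2 (den p w j)

/-- Remaining size `p_j(t)` of job `j` at integer time `t` under schedule `sched`,
where `sched t` is the job (if any) processed during the slot `[t, t+1]`. -/
def rem (p : ℕ → ℕ) (sched : ℕ → Option ℕ) (j t : ℕ) : ℕ :=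
  p j - ((Finset.range t).filter fun t' => sched t' = some j).card

/-- Remaining weight `w_j(t) = ρ_j · p_j(t)`. -/
def wrem (p : ℕ → ℕ) (w : ℕ → ℝ) (sched : ℕ → Option ℕ) (j t : ℕ) : ℝ :=
  den p w j * rem p sched j t

/-- Fractional weighted flow time `∑_{t ≥ r_j} w_j(t)` of job `j`. -/
def fracFlow (r p : ℕ → ℕ) (w : ℕ → ℝ) (sched : ℕ → Option ℕ) (j : ℕ) : ℝ :=
  ∑' t : ℕ, if r j ≤ t then wrem p w sched j t else 0

/-- `s` is the first time at which job `j` is ever processed. -/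
def isStart (sched : ℕ → Option ℕ) (j s : ℕ) : Prop :=
  sched s = some j ∧ ∀ s' < s, sched s' ≠ some j

/-- Active jobs `A(t)`: released by `t`, not immediately rejected, not yet finished. -/
def activeAt (J : Finset ℕ) (r p : ℕ → ℕ) (sched : ℕ → Option ℕ) (Jimm : Finset ℕ)
    (t : ℕ) : Finset ℕ :=
  J.filter fun j => r j ≤ t ∧ j ∉ Jimm ∧ 0 < rem p sched j t

/-- The set `A(r_j)` of active jobs present when `j` arrives: jobs released strictly
earlier, or simultaneously but earlier in the fixed (index) order, that are neither
rejected nor finished.  (`j` itself is excluded.) -/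
def arrSet (J : Finset ℕ) (r p : ℕ → ℕ) (sched : ℕ → Option ℕ) (Jimm : Finset ℕ)
    (j : ℕ) : Finset ℕ :=
  J.filter fun j' =>
    (r j' < r j ∨ (r j' = r j ∧ j' < j)) ∧ j' ∉ Jimm ∧ 0 < rem p sched j' (r j)

/-- `α_j`: the increase of total fractional weighted flow time caused by the arrival
of `j`, had HDF been run on `A(r_j) ∪ {j}` from time `r_j` on. -/
def alpha (J : Finset ℕ) (r p : ℕ → ℕ) (w : ℕ → ℝ) (sched : ℕ → Option ℕ)
    (Jimm : Finset ℕ) (j : ℕ) : ℝ :=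
  w j * ∑ j' ∈ (arrSet J r p sched Jimm j).filter (fun j' => den p w j ≤ den p w j'),
      (rem p sched j' (r j) : ℝ)
    + w j * p j / 2
    + p j * ∑ j' ∈ (arrSet J r p sched Jimm j).filter (fun j' => den p w j' < den p w j),
        wrem p w sched j' (r j)

/-- `α_j⁺`: the part of (the two sums of) `α_j` coming from jobs of density class
at least `⌊ρ_j⌋₂`. -/
def alphaPlus (J : Finset ℕ) (r p : ℕ → ℕ) (w : ℕ → ℝ) (sched : ℕ → Option ℕ)
    (Jimm : Finset ℕ) (j : ℕ) : ℝ :=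
  w j * ∑ j' ∈ (arrSet J r p sched Jimm j).filter
      (fun j' => cls p w j ≤ cls p w j' ∧ den p w j ≤ den p w j'),
      (rem p sched j' (r j) : ℝ)
    + p j * ∑ j' ∈ (arrSet J r p sched Jimm j).filter
        (fun j' => cls p w j ≤ cls p w j' ∧ den p w j' < den p w j),
        wrem p w sched j' (r j)

/-- `α_j⁻`: the contribution to `α_j` of jobs of density class strictly less
than `⌊ρ_j⌋₂`. -/
def alphaMinus (J : Finset ℕ) (r p : ℕ → ℕ) (w : ℕ → ℝ) (sched : ℕ → Option ℕ)
    (Jimm : Finset ℕ) (j : ℕ) : ℝ :=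
  p j * ∑ j' ∈ (arrSet J r p sched Jimm j).filter (fun j' => cls p w j' < cls p w j),
      wrem p w sched j' (r j)

/-- The set `J⁺` of jobs assigned to table `T⁺`. -/
def Jplus (J : Finset ℕ) (r p : ℕ → ℕ) (w : ℕ → ℝ) (sched : ℕ → Option ℕ)
    (Jimm : Finset ℕ) (ε : ℝ) : Finset ℕ :=
  J.filter fun j => w j * p j / ε ≤ alphaPlus J r p w sched Jimm j

/-- The set `J⁻` of jobs assigned to table `T⁻`. -/
def Jminus (J : Finset ℕ) (r p : ℕ → ℕ) (w : ℕ → ℝ) (sched : ℕ → Option ℕ)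
    (Jimm : Finset ℕ) (ε : ℝ) : Finset ℕ :=
  J.filter fun j => w j * p j / ε < alphaMinus J r p w sched Jimm j

/-- The bucket `(⌊α_j⁺/w_j⌋₂, ⌊w_j⌋₂)` of table `T⁺` to which a job of `J⁺` is assigned. -/
def bucketPlus (J : Finset ℕ) (r p : ℕ → ℕ) (w : ℕ → ℝ) (sched : ℕ → Option ℕ)
    (Jimm : Finset ℕ) (j : ℕ) : ℤ × ℤ :=
  (Int.log 2 (alphaPlus J r p w sched Jimm j / w j), Int.log 2 (w j))

/-- The bucket `(⌊α_j⁻⌋₂, ⌊ρ_j⌋₂, ⌊p_j⌋₂)` of table `T⁻` to which a job of `J⁻` is assigned. -/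
def bucketMinus (J : Finset ℕ) (r p : ℕ → ℕ) (w : ℕ → ℝ) (sched : ℕ → Option ℕ)
    (Jimm : Finset ℕ) (j : ℕ) : ℤ × ℤ × ℤ :=
  (Int.log 2 (alphaMinus J r p w sched Jimm j), cls p w j, Int.log 2 ((p j : ℝ)))

/-- `j'` arrives no later than `j` (simultaneous arrivals ordered by index). -/
def arrLE (r : ℕ → ℕ) (j' j : ℕ) : Prop :=
  r j' < r j ∨ (r j' = r j ∧ j' ≤ j)

/-- The (1-based) position of `j` in the arrival order of its bucket of `T⁺`. -/
def rankPlus (J : Finset ℕ) (r p : ℕ → ℕ) (w : ℕ → ℝ) (sched : ℕ → Option ℕ)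
    (Jimm : Finset ℕ) (ε : ℝ) (j : ℕ) : ℕ :=
  ((Jplus J r p w sched Jimm ε).filter fun j' =>
    bucketPlus J r p w sched Jimm j' = bucketPlus J r p w sched Jimm j ∧ arrLE r j' j).card

/-- The (1-based) position of `j` in the arrival order of its bucket of `T⁻`. -/
def rankMinus (J : Finset ℕ) (r p : ℕ → ℕ) (w : ℕ → ℝ) (sched : ℕ → Option ℕ)
    (Jimm : Finset ℕ) (ε : ℝ) (j : ℕ) : ℕ :=
  ((Jminus J r p w sched Jimm ε).filter fun j' =>
    bucketMinus J r p w sched Jimm j' = bucketMinus J r p w sched Jimm j ∧ arrLE r j' j).card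

/-- An execution of algorithm `A` on a job instance `(J, r, p, w)` with parameter
`ε` (where `k = 1/ε` is a positive integer): the data consists of the schedule
(`sched t` is the job processed in slot `[t, t+1]`), the set `Jimm` of immediately
rejected jobs, and the growing set `L t` of preemptible jobs; the fields below
axiomatise exactly the rules of algorithm `A`. -/
structure AlgA where
  /-- the (finite) set of jobs -/
  J : Finset ℕ
  /-- release times -/
  r : ℕ → ℕ
  /-- sizes -/
  p : ℕ → ℕ
  /-- weights -/
  w : ℕ → ℝ
  /-- the parameter ε -/
  ε : ℝ
  /-- `k = 1/ε`, a positive integer -/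
  k : ℕ
  /-- the schedule produced by algorithm `A` -/
  sched : ℕ → Option ℕ
  /-- the set `J^imm` of immediately rejected jobs -/
  Jimm : Finset ℕ
  /-- `L t` : the set of preemptible jobs at time `t` -/
  L : ℕ → Finset ℕ
  hp : ∀ j ∈ J, 0 < p j
  hw : ∀ j ∈ J, 0 < w j
  hε : 0 < ε
  hε2 : ε ^ 2 ≤ 1 / 2
  hk : (k : ℝ) = 1 / ε
  /-- immediate rejections: in each bucket of `T⁺` the first job and every
  `(1/ε)`-th job thereafter (positions `1, 1 + k, 1 + 2k, …`), and in each bucket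
  of `T⁻` every `(1/ε)`-th job (positions `k, 2k, …`), are rejected on arrival. -/
  hJimm : ∀ j, j ∈ Jimm ↔ j ∈ J ∧
    ((j ∈ Jplus J r p w sched Jimm ε ∧ rankPlus J r p w sched Jimm ε j % k = 1 % k) ∨
     (j ∈ Jminus J r p w sched Jimm ε ∧ rankMinus J r p w sched Jimm ε j % k = 0))
  hL0 : L 0 = ∅
  /-- a job enters `L` when the weight released since it started processing
  exceeds `w_j / ε`; once in `L` it stays in `L`. -/
  hLsucc : ∀ t j, j ∈ L (t + 1) ↔ j ∈ L t ∨
    (sched t = some j ∧ ∃ s, isStart sched j s ∧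
      w j / ε < ∑ j' ∈ J.filter (fun j' => s < r j' ∧ r j' ≤ t + 1), w j')
  /-- only active jobs are processed -/
  hvalid : ∀ t j, sched t = some j → j ∈ activeAt J r p sched Jimm t
  /-- a running job that is unfinished and not preemptible keeps running -/
  hcont : ∀ t j, sched t = some j → 0 < rem p sched j (t + 1) → j ∉ L (t + 1) →
    sched (t + 1) = some j
  /-- initially, a highest-density active job is processed (if any job is active) -/
  hHDF0 : (activeAt J r p sched Jimm 0 = ∅ ∧ sched 0 = none) ∨
    ∃ j, sched 0 = some j ∧ ∀ j' ∈ activeAt J r p sched Jimm 0, den p w j' ≤ den p w j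
  /-- whenever the previous job has finished or become preemptible (or no job was
  running), a highest-density active job is processed (if any job is active) -/
  hHDFsucc : ∀ t, (∀ j, sched t = some j → rem p sched j (t + 1) = 0 ∨ j ∈ L (t + 1)) →
    (activeAt J r p sched Jimm (t + 1) = ∅ ∧ sched (t + 1) = none) ∨
    ∃ j, sched (t + 1) = some j ∧
      ∀ j' ∈ activeAt J r p sched Jimm (t + 1), den p w j' ≤ den p w j
  /-- every job that is not immediately rejected is eventually finished by `A` -/
  hdone : ∀ j ∈ J, j ∉ Jimm → ∃ T, rem p sched j T = 0

/-! ### Geometric sums and the first jobs of the buckets -/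

lemma sum_zpow_le_of_lt (S : Finset ℤ) :
    ∀ m : ℤ, (∀ i ∈ S, i < m) → ∑ i ∈ S, (2 : ℝ) ^ i ≤ 2 ^ m := by
  refine Finset.induction_on_max S ?_ ?_
  · intro m _
    rw [Finset.sum_empty]
    positivity
  · intro a s hs ih m hm
    rw [Finset.sum_insert (fun h => lt_irrefl _ (hs a h))]
    have h1 := ih a hs
    have h2 : a + 1 ≤ m := hm a (Finset.mem_insert_self _ _)
    have h3 : (2 : ℝ) ^ (a + 1) ≤ 2 ^ m := zpow_le_zpow_right₀ (by norm_num) h2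
    rw [zpow_add_one₀ (by norm_num)] at h3
    linarith

/-- A sum of distinct powers of two, each at most `X`, is at most `2 * X`. -/
lemma sum_zpow_le (S : Finset ℤ) (X : ℝ) (hX : 0 ≤ X) (h : ∀ i ∈ S, (2 : ℝ) ^ i ≤ X) :
    ∑ i ∈ S, (2 : ℝ) ^ i ≤ 2 * X := by
  rcases S.eq_empty_or_nonempty with rfl | hS
  · simpa using hX
  · have h1 := sum_zpow_le_of_lt S (S.max' hS + 1)
      (fun i hi => Int.lt_add_one_of_le (S.le_max' i hi))
    rw [zpow_add_one₀ (by norm_num)] at h1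
    have := h _ (S.max'_mem hS)
    linarith

/-- The geometric charging argument for the first jobs of the buckets `(a, b)` of `T⁺`; `cl` is the
density class. -/
lemma sum_first_le (F J : Finset ℕ) (p : ℕ → ℕ) (w : ℕ → ℝ) (ε : ℝ) (hε : 0 < ε)
    (a b cl : ℕ → ℤ)
    (hinj : ∀ i ∈ F, ∀ j ∈ F, a i = a j → b i = b j → i = j)
    (h1 : ∀ j ∈ F, (2 : ℝ) ^ a j ≤ ∑ i ∈ J.filter (fun i => cl j ≤ cl i), (p i : ℝ))
    (h2 : ∀ j ∈ F, (2 : ℝ) ^ b j ≤ 4 * ε * 2 ^ a j * 2 ^ cl j)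
    (h3 : ∀ j ∈ J, (2 : ℝ) ^ cl j * p j ≤ w j) :
    ∑ j ∈ F, (2 : ℝ) ^ b j ≤ 32 * ε * ∑ j ∈ J, w j := by
  set P : ℤ → ℝ := fun c => ∑ i ∈ J.filter (fun i => c ≤ cl i), (p i : ℝ) with hP
  have hP0 : ∀ c, 0 ≤ P c := fun c => Finset.sum_nonneg fun _ _ => Nat.cast_nonneg _
  have hab : ∀ c x : ℤ, ∑ j ∈ (F.filter (fun j => cl j = c)).filter (fun j => a j = x),
      (2 : ℝ) ^ b j ≤ 8 * ε * 2 ^ x * 2 ^ c := by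
    intro c x
    have := sum_zpow_le (((F.filter (fun j => cl j = c)).filter (fun j => a j = x)).image b)
      (4 * ε * 2 ^ x * 2 ^ c) (by positivity) (by
        intro i hi
        simp only [Finset.mem_image, Finset.mem_filter] at hi
        obtain ⟨j, ⟨⟨hj, rfl⟩, rfl⟩, rfl⟩ := hi
        exact h2 j hj)
    rw [Finset.sum_image] at this
    · linarith
    · intro i hi j hj hij
      simp only [Finset.coe_filter, Finset.mem_filter, Set.mem_ofPred_eq] at hi hj
      exact hinj i hi.1.1 j hj.1.1 (hi.2.trans hj.2.symm) hij
  have hc : ∀ c : ℤ, ∑ j ∈ F.filter (fun j => cl j = c), (2 : ℝ) ^ b j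
      ≤ 16 * ε * (2 ^ c * P c) := by
    intro c
    rw [← Finset.sum_fiberwise_of_maps_to (s := F.filter (fun j => cl j = c)) (g := a)
      (t := (F.filter (fun j => cl j = c)).image a)
      (fun j hj => Finset.mem_image_of_mem a hj)]
    have hs := sum_zpow_le ((F.filter (fun j => cl j = c)).image a) (P c) (hP0 c) (by
        intro i hi
        simp only [Finset.mem_image, Finset.mem_filter] at hi
        obtain ⟨j, ⟨hj, rfl⟩, rfl⟩ := hi
        exact h1 j hj)
    calc _ ≤ ∑ x ∈ (F.filter (fun j => cl j = c)).image a, 8 * ε * 2 ^ c * (2 : ℝ) ^ x :=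
          Finset.sum_le_sum fun x _ => (hab c x).trans_eq (by ring)
      _ = 8 * ε * 2 ^ c * ∑ x ∈ (F.filter (fun j => cl j = c)).image a, (2 : ℝ) ^ x := by
          rw [Finset.mul_sum]
      _ ≤ 8 * ε * 2 ^ c * (2 * P c) := by gcongr
      _ = _ := by ring
  have hPsum : ∑ c ∈ F.image cl, (2 : ℝ) ^ c * P c ≤ 2 * ∑ j ∈ J, w j := by
    have : ∀ c : ℤ, (2 : ℝ) ^ c * P c = ∑ i ∈ J, if c ≤ cl i then (2 : ℝ) ^ c * p i else 0 := by
      intro c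
      rw [hP, Finset.mul_sum, Finset.sum_filter]
    simp_rw [this]
    rw [Finset.sum_comm, Finset.mul_sum]
    refine Finset.sum_le_sum fun i hi => ?_
    rw [← Finset.sum_filter, ← Finset.sum_mul]
    have hs := sum_zpow_le ((F.image cl).filter (fun c => c ≤ cl i)) (2 ^ cl i) (by positivity)
      (by
        intro c hc
        exact zpow_le_zpow_right₀ (by norm_num) (Finset.mem_filter.1 hc).2)
    calc _ ≤ 2 * 2 ^ cl i * (p i : ℝ) := by gcongr
      _ ≤ 2 * w i := by linarith [h3 i hi]
  rw [← Finset.sum_fiberwise_of_maps_to (s := F) (g := cl) (t := F.image cl)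
      (fun j hj => Finset.mem_image_of_mem cl hj)]
  calc _ ≤ ∑ c ∈ F.image cl, 16 * ε * ((2 : ℝ) ^ c * P c) := Finset.sum_le_sum fun c _ => hc c
    _ = 16 * ε * ∑ c ∈ F.image cl, (2 : ℝ) ^ c * P c := by rw [Finset.mul_sum]
    _ ≤ 16 * ε * (2 * ∑ j ∈ J, w j) := by gcongr
    _ = _ := by ring

/-! ### Ranks within buckets -/

/-- The rank of a job within its bucket determines the job. -/
lemma rank_inj {β : Type*} (S : Finset ℕ) (f : ℕ → β) (r : ℕ → ℕ) (rk : ℕ → ℕ)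
    (hrk : ∀ j, rk j = (S.filter fun j' => f j' = f j ∧ arrLE r j' j).card)
    (i : ℕ) (hi : i ∈ S) (j : ℕ) (hj : j ∈ S) (hf : f i = f j) (h : rk i = rk j) : i = j := by
  have key : ∀ i ∈ S, ∀ j ∈ S, f i = f j → (r i < r j ∨ (r i = r j ∧ i < j)) → rk i < rk j := by
    intro i hi j hj hf hlt
    rw [hrk, hrk]
    apply Finset.card_lt_card
    rw [Finset.ssubset_iff_of_subset]
    · refine ⟨j, ?_, ?_⟩
      · exact Finset.mem_filter.2 ⟨hj, rfl, Or.inr ⟨rfl, le_rfl⟩⟩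
      · intro hmem
        have h3 := (Finset.mem_filter.1 hmem).2.2
        unfold arrLE at h3
        omega
    · intro x hx
      obtain ⟨h1, h2, h3⟩ := Finset.mem_filter.1 hx
      refine Finset.mem_filter.2 ⟨h1, h2.trans hf, ?_⟩
      unfold arrLE at h3 ⊢
      omega
  by_contra hne
  rcases lt_trichotomy (r i) (r j) with h1 | h1 | h1
  · exact absurd h (key i hi j hj hf (Or.inl h1)).ne
  · rcases Nat.lt_or_gt_of_ne hne with h2 | h2
    · exact absurd h (key i hi j hj hf (Or.inr ⟨h1, h2⟩)).ne
    · exact absurd h (key j hj i hi hf.symm (Or.inr ⟨h1.symm, h2⟩)).ne'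
  · exact absurd h (key j hj i hi hf.symm (Or.inl h1)).ne'

/-- If the jobs of a bucket have equal weight up to a factor `C`, then jobs whose ranks, shifted by
`d`, are positive multiples of `k` carry at most a `C / k` fraction of the weight. -/
lemma sum_periodic_le {β : Type*} (S R : Finset ℕ) (f : ℕ → β) (r : ℕ → ℕ) (rk : ℕ → ℕ)
    (hrk : ∀ j, rk j = (S.filter fun j' => f j' = f j ∧ arrLE r j' j).card)
    (w : ℕ → ℝ) (C : ℝ) (hC : 0 ≤ C) (k d : ℕ) (hk : 0 < k)
    (hw0 : ∀ j ∈ S, 0 ≤ w j)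
    (hR : ∀ j ∈ R, j ∈ S ∧ d < rk j ∧ k ∣ rk j - d)
    (hw : ∀ i ∈ S, ∀ j ∈ S, f i = f j → w i ≤ C * w j) :
    ∑ j ∈ R, w j ≤ C * (1 / k) * ∑ j ∈ S, w j := by
  have hk' : (0 : ℝ) < k := by exact_mod_cast hk
  rw [← Finset.sum_fiberwise_of_maps_to (s := R) (g := f) (t := S.image f)
      (fun j hj => Finset.mem_image_of_mem f (hR j hj).1),
    ← Finset.sum_fiberwise_of_maps_to (s := S) (g := f) (t := S.image f)
      (fun j hj => Finset.mem_image_of_mem f hj), Finset.mul_sum]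
  refine Finset.sum_le_sum fun y hy => ?_
  set B := S.filter (fun j => f j = y) with hB
  set Q := R.filter (fun j => f j = y) with hQ
  have hBne : B.Nonempty := by
    obtain ⟨j, hj, rfl⟩ := Finset.mem_image.1 hy
    exact ⟨j, by simp [hB, hj]⟩
  have hcard : Q.card * k ≤ B.card := by
    have h1 : Q.card ≤ ((Finset.Ioc 0 B.card).filter (fun i => k ∣ i)).card := by
      apply Finset.card_le_card_of_injOn (fun j => rk j - d)
      · intro j hj
        obtain ⟨hjR, hjy⟩ := Finset.mem_filter.1 (Finset.mem_coe.1 hj)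
        obtain ⟨_, h2, h3⟩ := hR j hjR
        have : rk j ≤ B.card := by
          rw [hrk]
          apply Finset.card_le_card
          intro x hx
          obtain ⟨hx1, hx2, _⟩ := Finset.mem_filter.1 hx
          exact Finset.mem_filter.2 ⟨hx1, hx2.trans hjy⟩
        simp only [Finset.coe_filter, Finset.mem_Ioc, Set.mem_ofPred_eq]
        exact ⟨by omega, h3⟩
      · intro i hi j hj hij
        obtain ⟨hiR, hiy⟩ := Finset.mem_filter.1 (Finset.mem_coe.1 hi)
        obtain ⟨hjR, hjy⟩ := Finset.mem_filter.1 (Finset.mem_coe.1 hj)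
        have hi2 := hR i hiR
        have hj2 := hR j hjR
        refine rank_inj S f r rk hrk i hi2.1 j hj2.1 (hiy.trans hjy.symm) ?_
        simp only at hij
        omega
    rw [Nat.Ioc_filter_dvd_card_eq_div] at h1
    exact (Nat.mul_le_mul_right k h1).trans (Nat.div_mul_le_self _ _)
  obtain ⟨m, hm, hmin⟩ := B.exists_min_image w hBne
  have hmS := Finset.mem_filter.1 hm
  have hm0 : 0 ≤ w m := hw0 m hmS.1
  have hq : (Q.card : ℝ) * k ≤ B.card := by exact_mod_cast hcard
  calc ∑ j ∈ Q, w j ≤ ∑ j ∈ Q, C * w m := by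
        refine Finset.sum_le_sum fun j hj => ?_
        obtain ⟨hjR, hjy⟩ := Finset.mem_filter.1 hj
        exact hw j (hR j hjR).1 m hmS.1 (hjy.trans hmS.2.symm)
    _ = Q.card * (C * w m) := by simp
    _ = C * (1 / k) * ((Q.card * k) * w m) := by field_simp
    _ ≤ C * (1 / k) * (B.card * w m) := by gcongr
    _ = C * (1 / k) * ∑ j ∈ B, w m := by simp
    _ ≤ C * (1 / k) * ∑ j ∈ B, w j := by
        gcongr with j hj
        exact hmin j hj

/-! ### Preemptible jobs -/

lemma rem_antitone (p : ℕ → ℕ) (sched : ℕ → Option ℕ) (j : ℕ) {s t : ℕ} (h : s ≤ t) :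
    rem p sched j t ≤ rem p sched j s := by
  unfold rem
  apply Nat.sub_le_sub_left
  apply Finset.card_le_card
  exact Finset.filter_subset_filter _ (Finset.range_mono h)

lemma L_mono (A : AlgA) {s t : ℕ} (h : s ≤ t) : A.L s ⊆ A.L t := by
  induction t, h using Nat.le_induction with
  | base => exact Finset.Subset.refl _
  | succ n _ ih => exact fun j hj => (A.hLsucc n j).2 (Or.inl (ih hj))

/-- A job that ever enters `L` runs without interruption from its start `s` to the slot `t` at whose
end it enters `L`, and more than `w j / ε` weight is released in `(s, t + 1]`. -/
lemma exists_window (A : AlgA) (j : ℕ) (h : ∃ t, j ∈ A.L t) :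
    ∃ s t : ℕ, (∀ u, s ≤ u → u ≤ t → A.sched u = some j) ∧ s ≤ t ∧
      A.w j / A.ε < ∑ j' ∈ A.J.filter (fun j' => s < A.r j' ∧ A.r j' ≤ t + 1), A.w j' := by
  have hmin := fun m => Nat.find_min h (m := m)
  have hspec := Nat.find_spec h
  obtain ⟨t, ht⟩ : ∃ t, Nat.find h = t + 1 := by
    apply Nat.exists_eq_succ_of_ne_zero
    intro h0
    rw [h0, A.hL0] at hspec
    simp at hspec
  rw [ht] at hspec hmin
  rcases (A.hLsucc t j).1 hspec with h1 | ⟨h1, s, hs, hsum⟩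
  · exact absurd h1 (hmin _ (Nat.lt_succ_self t))
  · have hst : s ≤ t := by
      by_contra hlt
      exact hs.2 t (by omega) h1
    refine ⟨s, t, ?_, hst, hsum⟩
    intro u hu
    induction u, hu using Nat.le_induction with
    | base => exact fun _ => hs.1
    | succ u hu ih =>
      intro hut
      refine A.hcont u j (ih (by omega)) ?_ (hmin _ (by omega))
      have := (Finset.mem_filter.1 (A.hvalid t j h1)).2.2.2
      exact this.trans_le (rem_antitone _ _ _ hut)

lemma sum_L_le (A : AlgA) :
    ∑ j ∈ A.J.filter (fun j => ∃ t, j ∈ A.L t), A.w j ≤ A.ε * ∑ j ∈ A.J, A.w j := by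
  set M := A.J.filter (fun j => ∃ t, j ∈ A.L t) with hM
  have hex : ∀ j, ∃ s t : ℕ, j ∈ M → (∀ u, s ≤ u → u ≤ t → A.sched u = some j) ∧ s ≤ t ∧
      A.w j / A.ε < ∑ j' ∈ A.J.filter (fun j' => s < A.r j' ∧ A.r j' ≤ t + 1), A.w j' := by
    intro j
    by_cases hj : j ∈ M
    · obtain ⟨s, t, h⟩ := exists_window A j (Finset.mem_filter.1 hj).2
      exact ⟨s, t, fun _ => h⟩
    · exact ⟨0, 0, fun h => absurd h hj⟩
  choose s t hst using hex
  set win : ℕ → Finset ℕ :=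
    fun j => A.J.filter (fun j' => s j < A.r j' ∧ A.r j' ≤ t j + 1) with hwin
  have hdisj : (M : Set ℕ).PairwiseDisjoint win := by
    intro i hi j hj hij
    obtain ⟨hi1, hi2, _⟩ := hst i hi
    obtain ⟨hj1, hj2, _⟩ := hst j hj
    -- Neither job can start while the other one is running.
    have hA : ¬ (s i ≤ s j ∧ s j ≤ t i) := fun h => by
      have := (hi1 _ h.1 h.2).symm.trans (hj1 _ le_rfl hj2)
      exact hij (Option.some.inj this)
    have hB : ¬ (s j ≤ s i ∧ s i ≤ t j) := fun h => by
      have := (hj1 _ h.1 h.2).symm.trans (hi1 _ le_rfl hi2)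
      exact hij (Option.some.inj this).symm
    apply Finset.disjoint_left.2
    intro x hx hy
    have hx' := (Finset.mem_filter.1 hx).2
    have hy' := (Finset.mem_filter.1 hy).2
    omega
  have hle : ∀ j ∈ M, A.w j ≤ A.ε * ∑ j' ∈ win j, A.w j' := by
    intro j hj
    have := (hst j hj).2.2
    rw [div_lt_iff₀ A.hε] at this
    linarith
  calc _ ≤ ∑ j ∈ M, A.ε * ∑ j' ∈ win j, A.w j' := Finset.sum_le_sum hle
    _ = A.ε * ∑ j' ∈ M.biUnion win, A.w j' := by
        rw [← Finset.mul_sum, Finset.sum_biUnion hdisj]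
    _ ≤ A.ε * ∑ j ∈ A.J, A.w j := by
        refine mul_le_mul_of_nonneg_left ?_ A.hε.le
        refine Finset.sum_le_sum_of_subset_of_nonneg ?_ (fun j hj _ => (A.hw j hj).le)
        exact Finset.biUnion_subset.2 fun j _ => Finset.filter_subset _ _

/-! ### Immediately rejected jobs -/

lemma two_zpow_log_le {x : ℝ} (hx : 0 < x) : (2 : ℝ) ^ Int.log 2 x ≤ x := by
  exact_mod_cast Int.zpow_log_le_self (b := 2) (by norm_num) hx

lemma lt_two_zpow_log (x : ℝ) : x < 2 * (2 : ℝ) ^ Int.log 2 x := by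
  have := Int.lt_zpow_succ_log_self (b := 2) (by norm_num) x
  rw [Nat.cast_ofNat, zpow_add_one₀ (by norm_num)] at this
  linarith

lemma le_two_mul_of_log_eq {x y : ℝ} (hy : 0 < y) (h : Int.log 2 x = Int.log 2 y) :
    x ≤ 2 * y := by
  have h1 := lt_two_zpow_log x
  have h2 := two_zpow_log_le hy
  rw [h] at h1
  linarith

lemma k_ge_two (A : AlgA) : 2 ≤ A.k := by
  by_contra h
  have h1 : (A.k : ℝ) ≤ 1 := by exact_mod_cast (by omega : A.k ≤ 1)
  rw [A.hk, div_le_one A.hε] at h1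
  nlinarith [A.hε2]

lemma den_pos (A : AlgA) {j : ℕ} (hj : j ∈ A.J) : 0 < den A.p A.w j :=
  div_pos (A.hw j hj) (by exact_mod_cast A.hp j hj)

lemma den_mul (A : AlgA) {j : ℕ} (hj : j ∈ A.J) : den A.p A.w j * A.p j = A.w j :=
  div_mul_cancel₀ _ (by exact_mod_cast (A.hp j hj).ne')

/-- Each job in front of `j` contributes at most its remaining size to `α_j⁺ / w_j`: exactly that if
its density is at least `ρ_j`, and `ρ_{j'} / ρ_j < 1` times that otherwise. -/
lemma alphaPlus_le (A : AlgA) {j : ℕ} (hj : j ∈ A.J) :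
    alphaPlus A.J A.r A.p A.w A.sched A.Jimm j ≤
      A.w j * ∑ i ∈ A.J.filter (fun i => cls A.p A.w j ≤ cls A.p A.w i), (A.p i : ℝ) := by
  have hw := A.hw j hj
  unfold alphaPlus
  rw [Finset.sum_filter, Finset.sum_filter, Finset.mul_sum, Finset.mul_sum,
    ← Finset.sum_add_distrib, Finset.sum_filter, Finset.mul_sum]
  refine (Finset.sum_le_sum (g := fun i =>
    A.w j * if cls A.p A.w j ≤ cls A.p A.w i then (A.p i : ℝ) else 0) ?_).trans
    (Finset.sum_le_sum_of_subset_of_nonneg (Finset.filter_subset _ _) ?_)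
  · intro i hi
    have hrem : (rem A.p A.sched i (A.r j) : ℝ) ≤ A.p i := by
      exact_mod_cast Nat.sub_le _ _
    by_cases hc : cls A.p A.w j ≤ cls A.p A.w i
    · rcases le_or_gt (den A.p A.w j) (den A.p A.w i) with hd | hd
      · simp only [hc, hd, not_lt.2 hd, and_self, and_false, if_true, if_false, mul_zero, add_zero]
        gcongr
      · simp only [hc, hd, not_le.2 hd, and_self, and_false, if_true, if_false, mul_zero, zero_add]
        unfold wrem
        calc (A.p j : ℝ) * (den A.p A.w i * rem A.p A.sched i (A.r j))
            ≤ A.p j * (den A.p A.w j * A.p i) := by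
              have := den_pos A hj
              gcongr
          _ = A.w j * A.p i := by rw [← den_mul A hj]; ring
    · simp [hc]
  · intro i _ _
    split_ifs <;> positivity

lemma sum_minus_le (A : AlgA) :
    ∑ j ∈ (Jminus A.J A.r A.p A.w A.sched A.Jimm A.ε).filter
        (fun j => rankMinus A.J A.r A.p A.w A.sched A.Jimm A.ε j % A.k = 0), A.w j
      ≤ 4 * A.ε * ∑ j ∈ A.J, A.w j := by
  have hsub : Jminus A.J A.r A.p A.w A.sched A.Jimm A.ε ⊆ A.J := Finset.filter_subset _ _
  have hk := k_ge_two A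
  have hrk : ∀ j, rankMinus A.J A.r A.p A.w A.sched A.Jimm A.ε j =
      ((Jminus A.J A.r A.p A.w A.sched A.Jimm A.ε).filter fun j' =>
        bucketMinus A.J A.r A.p A.w A.sched A.Jimm j' =
          bucketMinus A.J A.r A.p A.w A.sched A.Jimm j ∧ arrLE A.r j' j).card := by
    intro j
    unfold rankMinus
    congr
  have := sum_periodic_le _
    ((Jminus A.J A.r A.p A.w A.sched A.Jimm A.ε).filter
        (fun j => rankMinus A.J A.r A.p A.w A.sched A.Jimm A.ε j % A.k = 0))
    (bucketMinus A.J A.r A.p A.w A.sched A.Jimm) A.r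
    (rankMinus A.J A.r A.p A.w A.sched A.Jimm A.ε) (by convert hrk) A.w 4 (by norm_num) A.k 0
    (by omega) (fun j hj => (A.hw j (hsub hj)).le) (by
      intro j hj
      obtain ⟨hj1, hj2⟩ := Finset.mem_filter.1 hj
      refine ⟨hj1, ?_, Nat.dvd_of_mod_eq_zero hj2⟩
      rw [hrk]
      exact Finset.card_pos.2 ⟨j, Finset.mem_filter.2 ⟨hj1, rfl, Or.inr ⟨rfl, le_rfl⟩⟩⟩) (by
      intro i hi j hj hij
      have hi' := hsub hi
      have hj' := hsub hj
      simp only [bucketMinus, Prod.mk.injEq] at hij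
      have h1 := le_two_mul_of_log_eq (den_pos A hj') hij.2.1
      have h2 := le_two_mul_of_log_eq
        (by exact_mod_cast A.hp j hj' : (0 : ℝ) < A.p j) hij.2.2
      rw [← den_mul A hi', ← den_mul A hj']
      have := den_pos A hj'
      calc _ ≤ (2 * den A.p A.w j) * (2 * (A.p j : ℝ)) := by gcongr
        _ = _ := by ring)
  rw [A.hk, one_div_one_div] at this
  refine this.trans ?_
  have := A.hε
  gcongr ?_ * ?_
  exact Finset.sum_le_sum_of_subset_of_nonneg hsub fun j hj _ => (A.hw j hj).le

lemma sum_plus_le (A : AlgA) :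
    ∑ j ∈ (Jplus A.J A.r A.p A.w A.sched A.Jimm A.ε).filter
        (fun j => rankPlus A.J A.r A.p A.w A.sched A.Jimm A.ε j % A.k = 1 % A.k), A.w j
      ≤ 66 * A.ε * ∑ j ∈ A.J, A.w j := by
  have hε := A.hε
  have hk := k_ge_two A
  set S := Jplus A.J A.r A.p A.w A.sched A.Jimm A.ε with hS
  set rk := rankPlus A.J A.r A.p A.w A.sched A.Jimm A.ε with hrkdef
  set bk := bucketPlus A.J A.r A.p A.w A.sched A.Jimm with hbk
  have hsub : S ⊆ A.J := Finset.filter_subset _ _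
  have hrk : ∀ j, rk j = (S.filter fun j' => bk j' = bk j ∧ arrLE A.r j' j).card := by
    intro j
    rw [hrkdef]
    unfold rankPlus
    congr
  have hnext : ∑ j ∈ S.filter (fun j => rk j % A.k = 1 % A.k ∧ rk j ≠ 1), A.w j
      ≤ 2 * A.ε * ∑ j ∈ A.J, A.w j := by
    have := sum_periodic_le S (S.filter (fun j => rk j % A.k = 1 % A.k ∧ rk j ≠ 1)) bk A.r rk
      (by convert hrk) A.w 2 (by norm_num) A.k 1 (by omega)
      (fun j hj => (A.hw j (hsub hj)).le) (by
        intro j hj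
        obtain ⟨hj1, hj2, hj3⟩ := Finset.mem_filter.1 hj
        have h1 : 0 < rk j := by
          rw [hrk]
          exact Finset.card_pos.2 ⟨j, Finset.mem_filter.2 ⟨hj1, rfl, Or.inr ⟨rfl, le_rfl⟩⟩⟩
        refine ⟨hj1, by omega, ?_⟩
        exact (Nat.modEq_iff_dvd' (by omega)).1 hj2.symm) (by
        intro i hi j hj hij
        rw [hbk] at hij
        simp only [bucketPlus, Prod.mk.injEq] at hij
        exact le_two_mul_of_log_eq (A.hw j (hsub hj)) hij.2)
    rw [A.hk, one_div_one_div] at this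
    refine this.trans ?_
    gcongr ?_ * ?_
    exact Finset.sum_le_sum_of_subset_of_nonneg hsub fun j hj _ => (A.hw j hj).le
  have hfirst : ∑ j ∈ S.filter (fun j => rk j = 1), (2 : ℝ) ^ (bk j).2
      ≤ 32 * A.ε * ∑ j ∈ A.J, A.w j := by
    refine sum_first_le _ A.J A.p A.w A.ε hε (fun j => (bk j).1) (fun j => (bk j).2)
      (cls A.p A.w) ?_ ?_ ?_ ?_
    · intro i hi j hj h1 h2
      obtain ⟨hi1, hi2⟩ := Finset.mem_filter.1 hi
      obtain ⟨hj1, hj2⟩ := Finset.mem_filter.1 hj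
      exact rank_inj S bk A.r rk (by convert hrk) i hi1 j hj1 (Prod.ext h1 h2)
        (hi2.trans hj2.symm)
    · intro j hj
      have hjS := (Finset.mem_filter.1 hj).1
      have hjJ := hsub hjS
      have hge := (Finset.mem_filter.1 hjS).2
      have hw := A.hw j hjJ
      have hp : (0 : ℝ) < A.p j := by exact_mod_cast A.hp j hjJ
      have hpos : 0 < alphaPlus A.J A.r A.p A.w A.sched A.Jimm j / A.w j :=
        div_pos (lt_of_lt_of_le (by positivity) hge) hw
      refine (two_zpow_log_le hpos).trans ?_
      rw [div_le_iff₀ hw, mul_comm]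
      exact alphaPlus_le A hjJ
    · intro j hj
      have hjS := (Finset.mem_filter.1 hj).1
      have hjJ := hsub hjS
      have hge := (Finset.mem_filter.1 hjS).2
      have hw := A.hw j hjJ
      have h1 : (A.p j : ℝ) ≤ A.ε * (alphaPlus A.J A.r A.p A.w A.sched A.Jimm j / A.w j) := by
        rw [div_le_iff₀ hε] at hge
        rw [← mul_div_assoc, le_div_iff₀ hw]
        linarith
      have h2 := (lt_two_zpow_log (alphaPlus A.J A.r A.p A.w A.sched A.Jimm j / A.w j)).le
      have h3 := (lt_two_zpow_log (den A.p A.w j)).le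
      have h4 := den_pos A hjJ
      calc (2 : ℝ) ^ (bk j).2 ≤ A.w j := two_zpow_log_le hw
        _ = den A.p A.w j * A.p j := (den_mul A hjJ).symm
        _ ≤ (2 * 2 ^ cls A.p A.w j) * (A.ε * (2 * 2 ^ (bk j).1)) := by
            refine mul_le_mul h3 (h1.trans ?_) (Nat.cast_nonneg _) (by positivity)
            exact mul_le_mul_of_nonneg_left h2 hε.le
        _ = _ := by ring
    · intro j hj
      rw [← den_mul A hj]
      exact mul_le_mul_of_nonneg_right (two_zpow_log_le (den_pos A hj)) (Nat.cast_nonneg _)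
  have hfirst' : ∑ j ∈ S.filter (fun j => rk j = 1), A.w j
      ≤ 2 * ∑ j ∈ S.filter (fun j => rk j = 1), (2 : ℝ) ^ (bk j).2 := by
    rw [Finset.mul_sum]
    exact Finset.sum_le_sum fun j _ => (lt_two_zpow_log (A.w j)).le
  have hsplit : ∑ j ∈ S.filter (fun j => rk j % A.k = 1 % A.k), A.w j
      ≤ ∑ j ∈ S.filter (fun j => rk j = 1), A.w j
        + ∑ j ∈ S.filter (fun j => rk j % A.k = 1 % A.k ∧ rk j ≠ 1), A.w j := by
    rw [Finset.sum_filter, Finset.sum_filter, Finset.sum_filter, ← Finset.sum_add_distrib]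
    refine Finset.sum_le_sum fun j hj => ?_
    have := (A.hw j (hsub hj)).le
    by_cases h1 : rk j = 1 <;> by_cases h2 : rk j % A.k = 1 % A.k <;> simp_all
  linarith

lemma sum_Jimm_le (A : AlgA) : ∑ j ∈ A.Jimm, A.w j ≤ 70 * A.ε * ∑ j ∈ A.J, A.w j := by
  set U := (Jplus A.J A.r A.p A.w A.sched A.Jimm A.ε).filter
        (fun j => rankPlus A.J A.r A.p A.w A.sched A.Jimm A.ε j % A.k = 1 % A.k) with hU
  set V := (Jminus A.J A.r A.p A.w A.sched A.Jimm A.ε).filter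
        (fun j => rankMinus A.J A.r A.p A.w A.sched A.Jimm A.ε j % A.k = 0) with hV
  have hUJ : U ⊆ A.J := (Finset.filter_subset _ _).trans (Finset.filter_subset _ _)
  have hVJ : V ⊆ A.J := (Finset.filter_subset _ _).trans (Finset.filter_subset _ _)
  have hsub : A.Jimm ⊆ U ∪ V := by
    intro j hj
    rw [Finset.mem_union, hU, hV, Finset.mem_filter, Finset.mem_filter]
    exact ((A.hJimm j).1 hj).2
  have h1 : ∑ j ∈ A.Jimm, A.w j ≤ ∑ j ∈ U ∪ V, A.w j :=
    Finset.sum_le_sum_of_subset_of_nonneg hsub fun j hj _ =>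
      (A.hw j (Finset.union_subset hUJ hVJ hj)).le
  have h2 : 0 ≤ ∑ j ∈ U ∩ V, A.w j :=
    Finset.sum_nonneg fun j hj => (A.hw j (hUJ (Finset.mem_inter.1 hj).1)).le
  have h3 := Finset.sum_union_inter (s₁ := U) (s₂ := V) (f := A.w)
  have h4 := sum_plus_le A
  have h5 := sum_minus_le A
  linarith

/-- The total weight of the immediately rejected jobs `J^imm`,
plus the total weight of the jobs that ever enter the preemptible set
`L = ∪_t L(t)`, is at most `c·ε` times the total weight of all jobs. -/
theorem weight_of_rejected_jobs_small :
    ∃ c : ℝ, 0 < c ∧ ∀ A : AlgA,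
      (∑ j ∈ A.Jimm, A.w j) +
        (∑ j ∈ A.J.filter (fun j => ∃ t, j ∈ A.L t), A.w j) ≤
        c * A.ε * ∑ j ∈ A.J, A.w j := by
  refine ⟨71, by norm_num, fun A => ?_⟩
  have h1 := sum_Jimm_le A
  have h2 := sum_L_le A
  linarith
end NPSched
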